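/- For any two orthogonal projections P and Q on a complex Hilbert space, there exists a continuous path of orthogonal projections connecting P to Q if and only if rank P = rank Q and rank(I−P) = rank(I−Q); in particular, if P has infinite rank and infinite corank in a separable space, then P and I − P can be connected by a continuous path in the set of projections. -/

import Mathlib

/-- `P` is an orthogonal projection: a self-adjoint idempotent. -/
def IsOrthProj {H : Type*} [NormedAddCommGroup H] [InnerProductSpace ℂ H]
    [CompleteSpace H] (P : H →L[ℂ] H) : Prop :=
  IsSelfAdjoint P ∧ P * P = P

/-- A continuous path of orthogonal projections from `P` to `Q`. -/
def ProjPath {H : Type*} [NormedAddCommGroup H] [InnerProductSpace ℂ H]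
    [CompleteSpace H] (P Q : H →L[ℂ] H) : Prop :=
  ∃ f : ℝ → (H →L[ℂ] H), ContinuousOn f (Set.Icc 0 1) ∧ f 0 = P ∧ f 1 = Q ∧
    ∀ t ∈ Set.Icc (0 : ℝ) 1, IsOrthProj (f t)

/-!
The rank is locally constant on idempotents: if `‖S - T‖ < 1` and `T` is idempotent, then `S` is
injective on the range of `T`. A path of projections therefore preserves rank and corank.

Conversely, a path of isometries `T` with fixed domain yields the path of projections `T T†`, so
it suffices to join isometries `V` and `W` onto the ranges of `P` and `Q`.

* If the domain is finite-dimensional, `W` differs from `V` by a unitary of the finite-dimensional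
  space `range V ⊔ range W`. The spectrum of this unitary misses a point of the circle, so a
  rotation moves it off `-1`, and a unitary without `-1` in its spectrum is joined to `1`.
* Isometries with orthogonal ranges are joined by `cos θ • V + sin θ • W`. If both ranges have
  infinite codimension, choose `V'` and `W'` with mutually orthogonal ranges, orthogonal to those of
  `V` and `W` respectively, and rotate from `V` to `V'`, then to `W'`, then to `W`.

If `P` has finite corank, the first case applies to `1 - P` and `1 - Q`.
-/

section RankOfIdempotents

variable {𝕜 E : Type*} [NontriviallyNormedField 𝕜] [NormedAddCommGroup E] [NormedSpace 𝕜 E]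

lemma rank_range_le_of_norm_sub_lt_one {S T : E →L[𝕜] E} (hT : IsIdempotentElem T)
    (h : ‖S - T‖ < 1) : Module.rank 𝕜 T.range ≤ Module.rank 𝕜 S.range := by
  refine (S.toLinearMap.rangeRestrict ∘ₗ T.range.subtype).rank_le_of_injective ?_
  rw [← LinearMap.ker_eq_bot, LinearMap.ker_eq_bot']
  rintro ⟨_, y, rfl⟩ hSTy
  replace hSTy : S (T y) = 0 := congrArg Subtype.val hSTy
  have hTTy : T (T y) = T y := congrArg (· y) hT
  have hnorm : ‖T y‖ ≤ ‖S - T‖ * ‖T y‖ := by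
    simpa [hSTy, hTTy] using (S - T).le_opNorm (T y)
  have : T y = 0 := by
    by_contra hne
    nlinarith [norm_pos_iff.mpr hne]
  exact Subtype.ext this

lemma isLocallyConstant_rank_range :
    IsLocallyConstant fun T : {T : E →L[𝕜] E // IsIdempotentElem T} ↦
      Module.rank 𝕜 (T : E →L[𝕜] E).range := by
  rw [IsLocallyConstant.iff_eventually_eq]
  intro T
  filter_upwards [Metric.ball_mem_nhds T one_pos] with S hST
  rw [Metric.mem_ball, Subtype.dist_eq, dist_eq_norm] at hST
  exact le_antisymm (rank_range_le_of_norm_sub_lt_one S.2 (norm_sub_rev (S : E →L[𝕜] E) T ▸ hST))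
    (rank_range_le_of_norm_sub_lt_one T.2 hST)

lemma rank_range_eq_of_joinedIn_isIdempotentElem {S T : E →L[𝕜] E}
    (h : JoinedIn {T | IsIdempotentElem T} S T) :
    Module.rank 𝕜 S.range = Module.rank 𝕜 T.range := by
  obtain ⟨γ⟩ := h.joined_subtype
  have hconst := isLocallyConstant_rank_range.comp_continuous γ.continuous
  have hends := hconst.apply_eq_of_preconnectedSpace 0 1
  rwa [Function.comp_apply, Function.comp_apply, γ.source, γ.target] at hends

end RankOfIdempotents

section OrthonormalSequences

variable {𝕜 E : Type*} [RCLike 𝕜] [NormedAddCommGroup E] [InnerProductSpace 𝕜 E]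

lemma exists_mem_orthogonal_norm_eq_one {K : Submodule 𝕜 E} (hK : ¬ FiniteDimensional 𝕜 K)
    (S : Submodule 𝕜 E) [FiniteDimensional 𝕜 S] : ∃ x ∈ K, x ∈ Sᗮ ∧ ‖x‖ = 1 := by
  have hnot_inj : ¬ Function.Injective (S.orthogonalProjectionOnto.toLinearMap.domRestrict K) :=
    fun hinj ↦ hK (FiniteDimensional.of_injective _ hinj)
  obtain ⟨x, hxK, hxS, hx0⟩ : ∃ x ∈ K, x ∈ Sᗮ ∧ x ≠ 0 := by
    simpa [← LinearMap.ker_eq_bot, LinearMap.ker_eq_bot', and_left_comm] using hnot_inj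
  exact ⟨(‖x‖⁻¹ : 𝕜) • x, K.smul_mem _ hxK, Sᗮ.smul_mem _ hxS, norm_smul_inv_norm hx0⟩

lemma exists_orthonormal_forall_mem {ι : Type*} [Countable ι] {K : ι → Submodule 𝕜 E}
    (hK : ∀ i, ¬ FiniteDimensional 𝕜 (K i)) :
    ∃ v : ι → E, Orthonormal 𝕜 v ∧ ∀ i, v i ∈ K i := by
  obtain ⟨f, hf⟩ := Countable.exists_injective_nat ι
  have hnext (i : ι) (v : (j : ι) → f j < f i → E) :
      ∃ x ∈ K i, ‖x‖ = 1 ∧ ∀ j hj, inner 𝕜 (v j hj) x = 0 := by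
    let earlier : Set E := Set.range fun j : {j // f j < f i} ↦ v j j.2
    have : Finite {j // f j < f i} := (Set.finite_lt_nat (f i)).preimage hf.injOn
    have : FiniteDimensional 𝕜 (Submodule.span 𝕜 earlier) :=
      FiniteDimensional.span_of_finite 𝕜 (Set.finite_range _)
    obtain ⟨x, hxK, hxv, hx1⟩ :=
      exists_mem_orthogonal_norm_eq_one (hK i) (Submodule.span 𝕜 earlier)
    exact ⟨x, hxK, hx1, fun j hj ↦ hxv _ (Submodule.subset_span ⟨⟨j, hj⟩, rfl⟩)⟩
  choose next next_mem norm_next inner_next using hnext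
  let v : ι → E := (measure f).wf.fix next
  have hv (i : ι) : v i = next i fun j _ ↦ v j := WellFounded.fix_eq _ _ _
  have inner_of_lt {i j : ι} (hij : f i < f j) : inner 𝕜 (v i) (v j) = 0 :=
    hv j ▸ inner_next j (fun k _ ↦ v k) i hij
  refine ⟨v, ⟨fun i ↦ hv i ▸ norm_next i _, fun i j hij ↦ ?_⟩, fun i ↦ hv i ▸ next_mem i _⟩
  rcases (hf.ne hij).lt_or_gt with hlt | hgt
  · exact inner_of_lt hlt
  · exact inner_eq_zero_symm.mp (inner_of_lt hgt)

lemma countable_of_orthonormal [TopologicalSpace.SeparableSpace E] {ι : Type*} {v : ι → E}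
    (hv : Orthonormal 𝕜 v) : Countable ι := by
  refine Pairwise.countable_of_isOpen_disjoint (s := fun i ↦ Metric.ball (v i) (1 / 2)) ?_
    (fun i ↦ Metric.isOpen_ball) (fun i ↦ Metric.nonempty_ball.mpr (by norm_num))
  intro i j hij
  have hdist : ‖v i - v j‖ ^ 2 = 2 := by
    rw [norm_sub_sq (𝕜 := 𝕜), hv.1 i, hv.1 j, hv.2 hij]
    norm_num
  refine Metric.ball_disjoint_ball ?_
  rw [dist_eq_norm]
  nlinarith [norm_nonneg (v i - v j)]

lemma nonempty_hilbertBasis_nat [CompleteSpace E] [TopologicalSpace.SeparableSpace E]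
    (hE : ¬ FiniteDimensional 𝕜 E) : Nonempty (HilbertBasis ℕ 𝕜 E) := by
  obtain ⟨w, b, -⟩ := exists_hilbertBasis 𝕜 E
  have : Countable w := countable_of_orthonormal b.orthonormal
  have : Infinite w := by
    by_contra hw
    rw [not_infinite_iff_finite] at hw
    have := Fintype.ofFinite w
    exact hE b.toOrthonormalBasis.toBasis.finiteDimensional_of_finite
  obtain ⟨e⟩ := nonempty_equiv_of_countable (α := ℕ) (β := w)
  refine ⟨HilbertBasis.mk (b.orthonormal.comp e e.injective) ?_⟩
  rw [e.surjective.range_comp, b.dense_span]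

open scoped lp in
lemma exists_linearIsometry_range_eq [TopologicalSpace.SeparableSpace E] {K : Submodule 𝕜 E}
    [CompleteSpace K] (hK : ¬ FiniteDimensional 𝕜 K) :
    ∃ V : ℓ²(ℕ, 𝕜) →ₗᵢ[𝕜] E, V.range = K := by
  have : SecondCountableTopology E := UniformSpace.secondCountable_of_separable E
  obtain ⟨b⟩ := nonempty_hilbertBasis_nat hK
  refine ⟨K.subtypeₗᵢ.comp b.repr.symm.toLinearIsometry, ?_⟩
  exact (LinearMap.range_comp_of_range_eq_top K.subtype
    (LinearEquiv.range b.repr.symm.toLinearEquiv)).trans K.range_subtype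

variable [CompleteSpace E]

lemma range_orthogonalFamily_linearIsometry_le {ι : Type*} {v : ι → E} (hv : Orthonormal 𝕜 v)
    {K : Submodule 𝕜 E} (hK : IsClosed (K : Set E)) (hvK : ∀ i, v i ∈ K) :
    hv.orthogonalFamily.linearIsometry.range ≤ K := by
  rw [hv.orthogonalFamily.range_linearIsometry]
  refine Submodule.topologicalClosure_minimal _ (iSup_le fun i ↦ ?_) hK
  rintro _ ⟨c, rfl⟩
  exact K.smul_mem c (hvK i)

open scoped lp in
lemma exists_linearIsometry_range_isOrtho {K L : Submodule 𝕜 E} (hKc : IsClosed (K : Set E))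
    (hLc : IsClosed (L : Set E)) (hK : ¬ FiniteDimensional 𝕜 K) (hL : ¬ FiniteDimensional 𝕜 L) :
    ∃ V W : ℓ²(ℕ, 𝕜) →ₗᵢ[𝕜] E, V.range ≤ K ∧ W.range ≤ L ∧ V.range ⟂ W.range := by
  obtain ⟨v, hv, hvmem⟩ := exists_orthonormal_forall_mem (ι := ℕ ⊕ ℕ)
    (K := Sum.elim (fun _ ↦ K) fun _ ↦ L) (Sum.forall.mpr ⟨fun _ ↦ hK, fun _ ↦ hL⟩)
  have hvl : Orthonormal 𝕜 (v ∘ Sum.inl) := hv.comp _ Sum.inl_injective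
  have hvr : Orthonormal 𝕜 (v ∘ Sum.inr) := hv.comp _ Sum.inr_injective
  refine ⟨hvl.orthogonalFamily.linearIsometry, hvr.orthogonalFamily.linearIsometry,
    range_orthogonalFamily_linearIsometry_le hvl hKc fun n ↦ hvmem (Sum.inl n),
    range_orthogonalFamily_linearIsometry_le hvr hLc fun n ↦ hvmem (Sum.inr n), ?_⟩
  refine range_orthogonalFamily_linearIsometry_le hvl (Submodule.isClosed_orthogonal _) fun m ↦ ?_
  rw [← Submodule.span_singleton_le_iff_mem, ← Submodule.IsOrtho, Submodule.isOrtho_comm]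
  refine range_orthogonalFamily_linearIsometry_le hvr (Submodule.isClosed_orthogonal _) fun n ↦ ?_
  exact Submodule.mem_orthogonal_singleton_iff_inner_right.mpr (hv.2 Sum.inl_ne_inr)

end OrthonormalSequences

section PathsOfIsometries

variable {𝕜 E F : Type*} [RCLike 𝕜] [NormedAddCommGroup E] [InnerProductSpace 𝕜 E]
  [NormedAddCommGroup F] [InnerProductSpace 𝕜 F]

lemma isometry_cos_smul_add_sin_smul {V W : E →ₗᵢ[𝕜] F} (h : V.range ⟂ W.range) (θ : ℝ) :
    Isometry ((Real.cos θ : 𝕜) • V.toContinuousLinearMap +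
      (Real.sin θ : 𝕜) • W.toContinuousLinearMap) := by
  refine (AddMonoidHomClass.isometry_iff_norm _).mpr fun x ↦ ?_
  have hVW : inner 𝕜 (V x) (W x) = 0 := h.inner_eq ⟨x, rfl⟩ ⟨x, rfl⟩
  have horth : inner 𝕜 ((Real.cos θ : 𝕜) • V x) ((Real.sin θ : 𝕜) • W x) = 0 := by
    rw [inner_smul_left, inner_smul_right, hVW, mul_zero, mul_zero]
  have hsq : ‖(Real.cos θ : 𝕜) • V x + (Real.sin θ : 𝕜) • W x‖ ^ 2 = ‖x‖ ^ 2 := by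
    rw [norm_add_pow_two (𝕜 := 𝕜), horth, norm_smul, norm_smul, V.norm_map, W.norm_map,
      RCLike.norm_ofReal, RCLike.norm_ofReal, mul_pow, mul_pow, sq_abs, sq_abs, map_zero]
    linear_combination ‖x‖ ^ 2 * Real.cos_sq_add_sin_sq θ
  exact (sq_eq_sq₀ (norm_nonneg _) (norm_nonneg _)).mp hsq

lemma joinedIn_isometry_of_isOrtho {V W : E →ₗᵢ[𝕜] F} (h : V.range ⟂ W.range) :
    JoinedIn {T : E →L[𝕜] F | Isometry T} V.toContinuousLinearMap W.toContinuousLinearMap := by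
  let rotation (t : ℝ) : E →L[𝕜] F :=
    (Real.cos (t * (Real.pi / 2)) : 𝕜) • V.toContinuousLinearMap +
      (Real.sin (t * (Real.pi / 2)) : 𝕜) • W.toContinuousLinearMap
  have hcont : Continuous rotation := by
    have := RCLike.continuous_ofReal (K := 𝕜)
    fun_prop
  refine JoinedIn.ofLine hcont.continuousOn (by simp [rotation]) (by simp [rotation]) ?_
  rintro _ ⟨t, -, rfl⟩
  exact isometry_cos_smul_add_sin_smul h _

open scoped lp in
lemma joinedIn_isometry_of_infinite_codim [CompleteSpace F] {V W : ℓ²(ℕ, 𝕜) →ₗᵢ[𝕜] F}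
    (hV : ¬ FiniteDimensional 𝕜 V.rangeᗮ) (hW : ¬ FiniteDimensional 𝕜 W.rangeᗮ) :
    JoinedIn {T : ℓ²(ℕ, 𝕜) →L[𝕜] F | Isometry T}
      V.toContinuousLinearMap W.toContinuousLinearMap := by
  obtain ⟨V', W', hV', hW', hV'W'⟩ := exists_linearIsometry_range_isOrtho
    V.range.isClosed_orthogonal W.range.isClosed_orthogonal hV hW
  have hVV' : V.range ⟂ V'.range := (Submodule.isOrtho_iff_le.mpr hV').symm
  have hW'W : W'.range ⟂ W.range := Submodule.isOrtho_iff_le.mpr hW'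
  exact ((joinedIn_isometry_of_isOrtho hVV').trans (joinedIn_isometry_of_isOrtho hV'W')).trans
    (joinedIn_isometry_of_isOrtho hW'W)

end PathsOfIsometries

section PathsOfUnitaries

lemma finite_spectrum_of_isIntegral {𝕜 A : Type*} [Field 𝕜] [Ring A] [Algebra 𝕜 A] {a : A}
    (ha : IsIntegral 𝕜 a) : (spectrum 𝕜 a).Finite := by
  nontriviality A
  refine ((minpoly 𝕜 a).rootSet_finite 𝕜).subset fun z hz ↦ ?_
  have hz0 := spectrum.subset_polynomial_aeval a (minpoly 𝕜 a) ⟨z, hz, rfl⟩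
  rw [minpoly.aeval, spectrum.zero_eq, Set.mem_singleton_iff] at hz0
  exact Polynomial.mem_rootSet.mpr ⟨minpoly.ne_zero ha, by simpa using hz0⟩

lemma circle_smul_mem_unitary {A : Type*} [Ring A] [StarRing A] [Algebra ℂ A] [StarModule ℂ A]
    (z : Circle) {u : A} (hu : u ∈ unitary A) : z • u ∈ unitary A := by
  have hz : (z : ℂ) ∈ unitary ℂ := by
    simp [Unitary.mem_iff_star_mul_self, ← Complex.normSq_eq_conj_mul_self]
  exact Unitary.smul_mem_of_mem (R := ℂ) hz hu

variable {A : Type*} [CStarAlgebra A]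

lemma joined_one_of_notMem_spectrum {u : unitary A} {c : Circle}
    (hc : (c : ℂ) ∉ spectrum ℂ (u : A)) : Joined 1 u := by
  let rotated (z : Circle) : unitary A := ⟨z • (u : A), circle_smul_mem_unitary z u.2⟩
  have hcont : Continuous rotated := by fun_prop
  have hspec : (-1 : ℂ) ∉ spectrum ℂ (rotated (-c⁻¹) : A) := by
    intro h
    let r : ℂˣ := Circle.toUnits (-c⁻¹)
    have hr : (-1 : ℂ) = r • (c : ℂ) := by simp [r, Units.smul_def]
    rw [hr] at h
    exact hc (spectrum.smul_mem_smul_iff.mp h)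
  have hnear : Joined 1 (rotated (-c⁻¹)) :=
    Unitary.joined _ _ ((Unitary.norm_sub_one_lt_two_iff (rotated (-c⁻¹)).2).mpr hspec)
  have hrot : Joined (rotated (-c⁻¹)) (rotated 1) :=
    (PathConnectedSpace.joined _ _).map hcont
  simpa [rotated] using hnear.trans hrot

lemma pathConnectedSpace_unitary [FiniteDimensional ℂ A] : PathConnectedSpace (unitary A) := by
  have : Nontrivial Circle := ⟨1, -1, fun h ↦ by norm_num [Circle.ext_iff] at h⟩
  have : Infinite Circle := PreconnectedSpace.infinite
  have joined_one (u : unitary A) : Joined 1 u := by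
    have hfin : {c : Circle | (c : ℂ) ∈ spectrum ℂ (u : A)}.Finite :=
      (finite_spectrum_of_isIntegral (.of_finite ℂ (u : A))).preimage Circle.coe_injective.injOn
    obtain ⟨c, hc⟩ := hfin.exists_notMem
    exact joined_one_of_notMem_spectrum hc
  exact ⟨⟨1⟩, fun u v ↦ (joined_one u).symm.trans (joined_one v)⟩

end PathsOfUnitaries

section PathsOfFiniteDimensionalIsometries

variable {E F : Type*} [NormedAddCommGroup E] [InnerProductSpace ℂ E]
  [NormedAddCommGroup F] [InnerProductSpace ℂ F]

lemma exists_unitary_apply_eq [FiniteDimensional ℂ F] (V W : E →ₗᵢ[ℂ] F) :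
    ∃ u : unitary (F →L[ℂ] F), ∀ x, (u : F →L[ℂ] F) (V x) = W x := by
  let imageMap := W.comp V.equivRange.symm.toLinearIsometry
  refine ⟨Unitary.linearIsometryEquiv.symm (imageMap.extend.toLinearIsometryEquiv rfl),
    fun x ↦ ?_⟩
  calc imageMap.extend (V x) = imageMap (V.equivRange x) := imageMap.extend_apply (V.equivRange x)
    _ = W x := congrArg W (V.equivRange.symm_apply_apply x)

lemma joinedIn_isometry_of_finiteDimensional [FiniteDimensional ℂ E] (V W : E →ₗᵢ[ℂ] F) :
    JoinedIn {T : E →L[ℂ] F | Isometry T} V.toContinuousLinearMap W.toContinuousLinearMap := by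
  let M : Submodule ℂ F := V.range ⊔ W.range
  let V' : E →ₗᵢ[ℂ] M :=
    ⟨V.toLinearMap.codRestrict M fun x ↦ Submodule.mem_sup_left ⟨x, rfl⟩, V.norm_map⟩
  let W' : E →ₗᵢ[ℂ] M :=
    ⟨W.toLinearMap.codRestrict M fun x ↦ Submodule.mem_sup_right ⟨x, rfl⟩, W.norm_map⟩
  obtain ⟨u, hu⟩ := exists_unitary_apply_eq V' W'
  let moved (w : unitary (M →L[ℂ] M)) : E →L[ℂ] F :=
    M.subtypeL ∘L w ∘L V'.toContinuousLinearMap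
  have hcont : Continuous moved := by fun_prop
  have hiso (w) : Isometry (moved w) := by
    refine (AddMonoidHomClass.isometry_iff_norm _).mpr fun x ↦ ?_
    calc ‖(w : M →L[ℂ] M) (V' x)‖ = ‖V' x‖ := Unitary.norm_map w _
      _ = ‖x‖ := V'.norm_map x
  have hV : moved 1 = V.toContinuousLinearMap := rfl
  have hW : moved u = W.toContinuousLinearMap :=
    ContinuousLinearMap.ext fun x ↦ congrArg Subtype.val (hu x)
  have := pathConnectedSpace_unitary (A := M →L[ℂ] M)
  have hjoined := (joinedIn_univ.mpr (PathConnectedSpace.joined 1 u)).map hcont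
  rw [hV, hW] at hjoined
  exact hjoined.mono (Set.image_subset_iff.mpr fun w _ ↦ hiso w)

end PathsOfFiniteDimensionalIsometries

section StarProjections

lemma joinedIn_isStarProjection_one_sub {A : Type*} [Ring A] [StarRing A] [TopologicalSpace A]
    [ContinuousSub A] {p q : A} (h : JoinedIn {r | IsStarProjection r} p q) :
    JoinedIn {r | IsStarProjection r} (1 - p) (1 - q) :=
  (h.map (continuous_const.sub continuous_id)).mono
    (Set.image_subset_iff.mpr fun _ hr ↦ hr.one_sub)

open ContinuousLinearMap

variable {𝕜 E F : Type*} [RCLike 𝕜] [NormedAddCommGroup E] [InnerProductSpace 𝕜 E]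
  [CompleteSpace E] [NormedAddCommGroup F] [InnerProductSpace 𝕜 F] [CompleteSpace F]

lemma isStarProjection_comp_adjoint_of_isometry {T : E →L[𝕜] F} (hT : Isometry T) :
    IsStarProjection (T ∘L adjoint T) := by
  have hadj : adjoint T ∘L T = 1 := T.isometry_iff_adjoint_comp_self.mp hT
  refine ⟨?_, T.isPositive_self_comp_adjoint.isSelfAdjoint⟩
  calc (T ∘L adjoint T) ∘L (T ∘L adjoint T) = T ∘L (adjoint T ∘L T) ∘L adjoint T := rfl
    _ = T ∘L adjoint T := by rw [hadj, one_def, id_comp]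

lemma range_comp_adjoint_of_isometry {T : E →L[𝕜] F} (hT : Isometry T) :
    (T ∘L adjoint T).range = T.range := by
  have hadj : adjoint T ∘L T = 1 := T.isometry_iff_adjoint_comp_self.mp hT
  refine LinearMap.range_comp_of_range_eq_top T.toLinearMap (LinearMap.range_eq_top.mpr fun x ↦ ?_)
  exact ⟨T x, congrArg (· x) hadj⟩

lemma comp_adjoint_eq_of_range_eq {P : F →L[𝕜] F} (hP : IsStarProjection P) {T : E →L[𝕜] F}
    (hT : Isometry T) (hrange : T.range = P.range) : T ∘L adjoint T = P :=
  (IsStarProjection.ext_iff (isStarProjection_comp_adjoint_of_isometry hT) hP).mpr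
    ((range_comp_adjoint_of_isometry hT).trans hrange)

variable {P Q : F →L[𝕜] F}

lemma joinedIn_isStarProjection_of_joinedIn_isometry (hP : IsStarProjection P)
    (hQ : IsStarProjection Q) {V W : E →L[𝕜] F} (hV : V.range = P.range) (hW : W.range = Q.range)
    (h : JoinedIn {T : E →L[𝕜] F | Isometry T} V W) :
    JoinedIn {R | IsStarProjection R} P Q := by
  have hcont : Continuous fun T : E →L[𝕜] F ↦ T ∘L adjoint T := by fun_prop
  rw [← comp_adjoint_eq_of_range_eq hP h.source_mem hV,
    ← comp_adjoint_eq_of_range_eq hQ h.target_mem hW]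
  exact (h.map hcont).mono
    (Set.image_subset_iff.mpr fun _ hT ↦ isStarProjection_comp_adjoint_of_isometry hT)

lemma orthogonal_range_of_isStarProjection (hP : IsStarProjection P) :
    P.rangeᗮ = (1 - P).range := by
  rw [IsStarNormal.orthogonal_range hP.isSelfAdjoint.isStarNormal]
  exact LinearMap.IsIdempotentElem.ker_eq_range_one_sub
    (IsIdempotentElem.toLinearMap hP.isIdempotentElem)

lemma joinedIn_isStarProjection_of_infinite_rank_corank [TopologicalSpace.SeparableSpace F]
    (hP : IsStarProjection P) (hQ : IsStarProjection Q)
    (hPinf : ¬ FiniteDimensional 𝕜 P.range) (hPco : ¬ FiniteDimensional 𝕜 (1 - P).range)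
    (hQinf : ¬ FiniteDimensional 𝕜 Q.range) (hQco : ¬ FiniteDimensional 𝕜 (1 - Q).range) :
    JoinedIn {R | IsStarProjection R} P Q := by
  have : CompleteSpace P.range :=
    (IsIdempotentElem.isClosed_range hP.isIdempotentElem).completeSpace_coe
  have : CompleteSpace Q.range :=
    (IsIdempotentElem.isClosed_range hQ.isIdempotentElem).completeSpace_coe
  obtain ⟨V, hV⟩ := exists_linearIsometry_range_eq hPinf
  obtain ⟨W, hW⟩ := exists_linearIsometry_range_eq hQinf
  rw [← orthogonal_range_of_isStarProjection hP, ← hV] at hPco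
  rw [← orthogonal_range_of_isStarProjection hQ, ← hW] at hQco
  exact joinedIn_isStarProjection_of_joinedIn_isometry hP hQ hV hW
    (joinedIn_isometry_of_infinite_codim hPco hQco)

end StarProjections

section PathsOfProjections

variable {H : Type*} [NormedAddCommGroup H] [InnerProductSpace ℂ H] [CompleteSpace H]
  {P Q : H →L[ℂ] H}

lemma joinedIn_isStarProjection_of_finite_rank_eq [FiniteDimensional ℂ P.range]
    (hP : IsStarProjection P) (hQ : IsStarProjection Q)
    (hrank : Module.rank ℂ P.range = Module.rank ℂ Q.range) :
    JoinedIn {R | IsStarProjection R} P Q := by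
  have : FiniteDimensional ℂ Q.range :=
    Module.rank_lt_aleph0_iff.mp (hrank ▸ Module.rank_lt_aleph0 ℂ P.range)
  have hfinrank : Module.finrank ℂ P.range = Module.finrank ℂ Q.range :=
    congrArg Cardinal.toNat hrank
  let e : P.range ≃ₗᵢ[ℂ] Q.range := (stdOrthonormalBasis ℂ P.range).equiv
    (stdOrthonormalBasis ℂ Q.range) (finCongr hfinrank)
  let V := P.range.subtypeₗᵢ
  let W := Q.range.subtypeₗᵢ.comp e.toLinearIsometry
  have hV : V.range = P.range := P.range.range_subtype
  have hW : W.range = Q.range :=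
    (LinearMap.range_comp_of_range_eq_top Q.range.subtype
      (LinearEquiv.range e.toLinearEquiv)).trans Q.range.range_subtype
  exact joinedIn_isStarProjection_of_joinedIn_isometry hP hQ hV hW
    (joinedIn_isometry_of_finiteDimensional V W)

lemma joinedIn_isStarProjection_iff_rank_corank_eq [TopologicalSpace.SeparableSpace H]
    (hP : IsStarProjection P) (hQ : IsStarProjection Q) :
    JoinedIn {R | IsStarProjection R} P Q ↔ Module.rank ℂ P.range = Module.rank ℂ Q.range ∧
      Module.rank ℂ (1 - P).range = Module.rank ℂ (1 - Q).range := by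
  constructor
  · intro h
    have rank_eq {R S : H →L[ℂ] H} (h : JoinedIn {R | IsStarProjection R} R S) :
        Module.rank ℂ R.range = Module.rank ℂ S.range :=
      rank_range_eq_of_joinedIn_isIdempotentElem (h.mono fun _ hR ↦ hR.isIdempotentElem)
    exact ⟨rank_eq h, rank_eq (joinedIn_isStarProjection_one_sub h)⟩
  rintro ⟨hrank, hcorank⟩
  by_cases hPfin : FiniteDimensional ℂ P.range
  · exact joinedIn_isStarProjection_of_finite_rank_eq hP hQ hrank
  by_cases hPcofin : FiniteDimensional ℂ (1 - P).range
  · simpa only [sub_sub_cancel] using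
      joinedIn_isStarProjection_one_sub
        (joinedIn_isStarProjection_of_finite_rank_eq hP.one_sub hQ.one_sub hcorank)
  refine joinedIn_isStarProjection_of_infinite_rank_corank hP hQ hPfin hPcofin ?_ ?_
  · rwa [FiniteDimensional, ← Module.rank_lt_aleph0_iff, ← hrank, Module.rank_lt_aleph0_iff]
  · rwa [FiniteDimensional, ← Module.rank_lt_aleph0_iff, ← hcorank, Module.rank_lt_aleph0_iff]

lemma isOrthProj_iff_isStarProjection : IsOrthProj P ↔ IsStarProjection P :=
  ⟨fun h ↦ ⟨h.2, h.1⟩, fun h ↦ ⟨h.2, h.1⟩⟩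

lemma projPath_iff_joinedIn :
    ProjPath P Q ↔ JoinedIn {R : H →L[ℂ] H | IsStarProjection R} P Q := by
  simp only [ProjPath, isOrthProj_iff_isStarProjection]
  constructor
  · rintro ⟨f, hf, h0, h1, hproj⟩
    exact JoinedIn.ofLine hf h0 h1 (Set.image_subset_iff.mpr hproj)
  · rintro ⟨γ, hγ⟩
    refine ⟨γ.extend, γ.continuous_extend.continuousOn, γ.extend_zero, γ.extend_one,
      fun t ht ↦ ?_⟩
    rw [γ.extend_apply ht]
    exact hγ _

end PathsOfProjections

theorem stmt_13_general {H : Type*} [NormedAddCommGroup H] [InnerProductSpace ℂ H]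
    [CompleteSpace H] [TopologicalSpace.SeparableSpace H] :
    (∀ P Q : H →L[ℂ] H, IsOrthProj P → IsOrthProj Q →
      (ProjPath P Q ↔
        (Module.rank ℂ (LinearMap.range (P : H →ₗ[ℂ] H)) =
           Module.rank ℂ (LinearMap.range (Q : H →ₗ[ℂ] H)) ∧
         Module.rank ℂ (LinearMap.range ((1 - P : H →L[ℂ] H) : H →ₗ[ℂ] H)) =
           Module.rank ℂ (LinearMap.range ((1 - Q : H →L[ℂ] H) : H →ₗ[ℂ] H))))) ∧
    (∀ P : H →L[ℂ] H, IsOrthProj P →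
      ¬ FiniteDimensional ℂ (LinearMap.range (P : H →ₗ[ℂ] H)) →
      ¬ FiniteDimensional ℂ (LinearMap.range ((1 - P : H →L[ℂ] H) : H →ₗ[ℂ] H)) →
      ProjPath P (1 - P)) := by
  simp only [isOrthProj_iff_isStarProjection, projPath_iff_joinedIn]
  refine ⟨fun P Q hP hQ ↦ joinedIn_isStarProjection_iff_rank_corank_eq hP hQ,
    fun P hP hrank hcorank ↦ ?_⟩
  refine joinedIn_isStarProjection_of_infinite_rank_corank hP hP.one_sub hrank hcorank hcorank ?_
  rwa [sub_sub_cancel]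

theorem stmt_13 {H : Type*} [NormedAddCommGroup H] [InnerProductSpace ℂ H]
    [CompleteSpace H] [TopologicalSpace.SeparableSpace H]
    (hinf : ¬ FiniteDimensional ℂ H) :
    (∀ P Q : H →L[ℂ] H, IsOrthProj P → IsOrthProj Q →
      (ProjPath P Q ↔
        (Module.rank ℂ (LinearMap.range (P : H →ₗ[ℂ] H)) =
           Module.rank ℂ (LinearMap.range (Q : H →ₗ[ℂ] H)) ∧
         Module.rank ℂ (LinearMap.range ((1 - P : H →L[ℂ] H) : H →ₗ[ℂ] H)) =
           Module.rank ℂ (LinearMap.range ((1 - Q : H →L[ℂ] H) : H →ₗ[ℂ] H))))) ∧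
    (∀ P : H →L[ℂ] H, IsOrthProj P →
      ¬ FiniteDimensional ℂ (LinearMap.range (P : H →ₗ[ℂ] H)) →
      ¬ FiniteDimensional ℂ (LinearMap.range ((1 - P : H →L[ℂ] H) : H →ₗ[ℂ] H)) →
      ProjPath P (1 - P)) :=
  stmt_13_general
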